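/- arXiv:2511.06524 — 4 statements merged into one kernel-verified Lean document; each statement's English description precedes it below -/
import Mathlib

section
/- Let A ∈ ℝ^{n×n}, B ∈ ℝ^{n×m}, C ∈ ℝ^{p×n}, μ := (p+m)·n, F ∈ ℝ^{n×n}, L ∈ ℝ^{n×p}, and let T ∈ ℝ^{n×n} be invertible with F·T = T·(A − L·C). Define θ := [vec(T·L); vec(T·B)] ∈ ℝ^{μ} (vertical concatenation). Then for every u : ℝ → ℝ^m, every differentiable x : ℝ → ℝ^n with x'(t) = A·x(t) + B·u(t) for all t ≥ 0, with y(t) := C·x(t), and every differentiable M : ℝ → ℝ^{n×μ} with M'(t) = F·M(t) + [y(t)^⊤ ⊗ I_n , u(t)^⊤ ⊗ I_n] for all t ≥ 0, it holds for all t ≥ 0 that T·x(t) = M(t)·θ + exp(F·t)·(T·x(0) − M(0)·θ). -/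
open Matrix Filter
open scoped Kronecker

/-- Column-stacking vectorization `vec X : (col, row) ↦ X row col`
(`vec X` stacks the columns of `X` one below another). -/
def mvec {l : ℕ} {K : Type*} (X : Matrix (Fin l) K ℝ) : K × Fin l → ℝ :=
  fun q => X q.2 q.1

/-- The Kronecker product `θᵀ ⊗ S` of a row vector `θᵀ` with a square matrix `S`,
with the trivial row index of `θᵀ` flattened away. -/
def rowKron {n : ℕ} {K : Type*} (θ : K → ℝ) (S : Matrix (Fin n) (Fin n) ℝ) :
    Matrix (Fin n) (K × Fin n) ℝ :=
  ((Matrix.of fun (_ : Fin 1) j => θ j) ⊗ₖ S).submatrix (fun i => ((0 : Fin 1), i)) id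

/-- Column index set of the Kreisselmeier filter state `M ∈ ℝ^{n × (p+m)n}`. -/
abbrev Kix (n m p : ℕ) := (Fin p × Fin n) ⊕ (Fin m × Fin n)

/-- The regressor `[yᵀ ⊗ Iₙ , uᵀ ⊗ Iₙ] ∈ ℝ^{n × (p+m)n}` (horizontal concatenation). -/
def regressor {m p : ℕ} (n : ℕ) (y : Fin p → ℝ) (u : Fin m → ℝ) :
    Matrix (Fin n) (Kix n m p) ℝ :=
  Matrix.fromCols (rowKron y (1 : Matrix (Fin n) (Fin n) ℝ))
    (rowKron u (1 : Matrix (Fin n) (Fin n) ℝ))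

/-- A real square matrix is Hurwitz if all of its eigenvalues over `ℂ`
have strictly negative real part. -/
def IsHurwitz {N : Type*} [Fintype N] [DecidableEq N] (A : Matrix N N ℝ) : Prop :=
  ∀ z ∈ spectrum ℂ (A.map (Complex.ofReal : ℝ → ℂ)), z.re < 0

/-- PBH test for stabilizability: for every `λ ∈ ℂ` with `Re λ ≥ 0`,
`rank [λ·I − A₀ , B₀] = q` over `ℂ`. -/
def IsStabilizable {q m : Type*} [Fintype q] [DecidableEq q] [Fintype m]
    (A₀ : Matrix q q ℝ) (B₀ : Matrix q m ℝ) : Prop :=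
  ∀ z : ℂ, 0 ≤ z.re →
    (Matrix.fromCols (z • (1 : Matrix q q ℂ) - A₀.map (Complex.ofReal : ℝ → ℂ))
      (B₀.map (Complex.ofReal : ℝ → ℂ))).rank = Fintype.card q

/-- Euclidean norm of a vector. -/
noncomputable def euclNorm {ι : Type*} [Fintype ι] (v : ι → ℝ) : ℝ :=
  Real.sqrt (∑ i, v i ^ 2)

/-- Frobenius norm of a matrix. -/
noncomputable def frobNorm {ι K : Type*} [Fintype ι] [Fintype K] (X : Matrix ι K ℝ) : ℝ :=
  Real.sqrt (∑ i, ∑ j, X i j ^ 2)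

/-- `F_ξ := I_μ ⊗ F`. -/
def Fxi {n m p : ℕ} (F : Matrix (Fin n) (Fin n) ℝ) :
    Matrix (Kix n m p × Fin n) (Kix n m p × Fin n) ℝ :=
  (1 : Matrix (Kix n m p) (Kix n m p) ℝ) ⊗ₖ F

/-- `B_ξ := [0_{pn²×m} ; I_m ⊗ vec(I_n)]` (vertical concatenation), written entrywise
on the flattened row index `Kix n m p × Fin n`. -/
def Bxi (n m p : ℕ) : Matrix (Kix n m p × Fin n) (Fin m) ℝ :=
  Matrix.of fun q j =>
    Sum.elim (fun _ => (0 : ℝ))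
      (fun ja => (1 : Matrix (Fin m) (Fin m) ℝ) ja.1 j *
        (1 : Matrix (Fin n) (Fin n) ℝ) ja.2 q.2) q.1

/-- `L_ξ := [I_p ⊗ vec(I_n) ; 0_{mn²×p}]` (vertical concatenation), written entrywise
on the flattened row index `Kix n m p × Fin n`. -/
def Lxi (n m p : ℕ) : Matrix (Kix n m p × Fin n) (Fin p) ℝ :=
  Matrix.of fun q j =>
    Sum.elim (fun ya => (1 : Matrix (Fin p) (Fin p) ℝ) ya.1 j *
        (1 : Matrix (Fin n) (Fin n) ℝ) ya.2 q.2) (fun _ => (0 : ℝ)) q.1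

/-!
The error `e = T x - M θ` obeys the autonomous equation `e' = F e`: the intertwining relation
`F T = T (A - L C)` turns `T x'` into `F T x + T L y + T B u`, and the choice of `θ` makes the
regressor contribute exactly `T L y + T B u` to `(M θ)'`. Differentiating `exp (-t F) e t` shows
that it is constant, so `e t = exp (t F) e 0`.
-/

section MatrixODE

variable {𝕜 ι : Type*} [RCLike 𝕜]

-- Matrix-valued derivatives are taken entrywise, which avoids choosing a norm on matrices.
theorem hasDerivWithinAt_mulVec {κ : Type*} [Fintype κ]
    {P : 𝕜 → Matrix ι κ 𝕜} {P' : Matrix ι κ 𝕜} {v : 𝕜 → κ → 𝕜} {v' : κ → 𝕜} {s : Set 𝕜} {t : 𝕜}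
    (hP : ∀ i j, HasDerivWithinAt (fun r => P r i j) (P' i j) s t)
    (hv : HasDerivWithinAt v v' s t) :
    HasDerivWithinAt (fun r => P r *ᵥ v r) (P' *ᵥ v t + P t *ᵥ v') s t := by
  refine hasDerivWithinAt_pi.2 fun i => ?_
  have hsum := HasDerivWithinAt.fun_sum (u := Finset.univ) fun j _ =>
    (hP i j).mul (hasDerivWithinAt_pi.1 hv j)
  exact hsum.congr_deriv Finset.sum_add_distrib

variable [Fintype ι] [DecidableEq ι]

theorem hasDerivAt_exp_smul_apply (F : Matrix ι ι 𝕜) (t : 𝕜) (i j : ι) :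
    HasDerivAt (fun r : 𝕜 => NormedSpace.exp (r • F) i j)
      ((NormedSpace.exp (t • F) * F) i j) t := by
  let _ : NormedRing (Matrix ι ι 𝕜) := Matrix.linftyOpNormedRing
  let _ : NormedAlgebra 𝕜 (Matrix ι ι 𝕜) := Matrix.linftyOpNormedAlgebra
  -- Instance search only offers completeness for the product uniformity on matrices.
  have : @CompleteSpace (Matrix ι ι 𝕜) PseudoMetricSpace.toUniformSpace :=
    FiniteDimensional.complete 𝕜 _
  have hexp : HasDerivAt (fun r : 𝕜 => NormedSpace.exp (r • F)) (NormedSpace.exp (t • F) * F) t :=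
    hasDerivAt_exp_smul_const F t
  exact (Matrix.entryLinearMap 𝕜 𝕜 i j).toContinuousLinearMap.hasFDerivAt.comp_hasDerivAt t hexp

theorem exp_mulVec_exp_neg_mulVec (X : Matrix ι ι 𝕜) (v : ι → 𝕜) :
    NormedSpace.exp X *ᵥ (NormedSpace.exp (-X) *ᵥ v) = v := by
  rw [mulVec_mulVec, ← Matrix.exp_add_of_commute _ _ (Commute.refl X).neg_right, add_neg_cancel,
    NormedSpace.exp_zero, one_mulVec]

theorem eq_exp_smul_mulVec_of_hasDerivWithinAt {F : Matrix ι ι 𝕜} {e : 𝕜 → ι → 𝕜} {s : Set 𝕜}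
    (hs : Convex ℝ s) (he : ∀ t ∈ s, HasDerivWithinAt e (F *ᵥ e t) s t)
    (h0 : 0 ∈ s) {t : 𝕜} (ht : t ∈ s) :
    e t = NormedSpace.exp (t • F) *ᵥ e 0 := by
  have hderiv : ∀ r ∈ s, HasDerivWithinAt (fun r => NormedSpace.exp (r • -F) *ᵥ e r) 0 s r := by
    intro r hr
    refine (hasDerivWithinAt_mulVec
      (fun i j => (hasDerivAt_exp_smul_apply (-F) r i j).hasDerivWithinAt) (he r hr)).congr_deriv ?_
    rw [mul_neg, neg_mulVec, mulVec_mulVec, neg_add_cancel]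
  have hconst : NormedSpace.exp (t • -F) *ᵥ e t = e 0 := by
    have hle := hs.norm_image_sub_le_of_norm_hasDerivWithin_le hderiv
      (fun _ _ => norm_zero.le) h0 ht
    simpa [sub_eq_zero] using hle
  rw [← hconst, smul_neg, exp_mulVec_exp_neg_mulVec]

end MatrixODE

section Regressor

variable {n : ℕ}

theorem rowKron_mulVec_mvec {K : Type*} [Fintype K] (y : K → ℝ) (S : Matrix (Fin n) (Fin n) ℝ)
    (X : Matrix (Fin n) K ℝ) :
    rowKron y S *ᵥ mvec X = S *ᵥ (X *ᵥ y) := by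
  ext i
  calc (rowKron y S *ᵥ mvec X) i
      = vec (S * X * (Matrix.of fun (_ : Fin 1) j => y j)ᵀ) (0, i) :=
        congrFun (kronecker_mulVec_vec S X _) (0, i)
    _ = (S *ᵥ (X *ᵥ y)) i := congrFun (mulVec_mulVec y S X).symm i

theorem regressor_mulVec_elim_mvec {m p : ℕ} (y : Fin p → ℝ) (u : Fin m → ℝ)
    (X : Matrix (Fin n) (Fin p) ℝ) (Y : Matrix (Fin n) (Fin m) ℝ) :
    regressor n y u *ᵥ Sum.elim (mvec X) (mvec Y) = X *ᵥ y + Y *ᵥ u := by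
  rw [regressor, fromCols_mulVec, Sum.elim_comp_inl, Sum.elim_comp_inr, rowKron_mulVec_mvec,
    rowKron_mulVec_mvec, one_mulVec, one_mulVec]

end Regressor

theorem kreisselmeier_error_dynamics {k n m p : ℕ}
    {A : Matrix (Fin n) (Fin n) ℝ} {C : Matrix (Fin p) (Fin n) ℝ}
    {F : Matrix (Fin k) (Fin k) ℝ} {L : Matrix (Fin n) (Fin p) ℝ} {T : Matrix (Fin k) (Fin n) ℝ}
    (hFT : F * T = T * (A - L * C)) (B : Matrix (Fin n) (Fin m) ℝ)
    (x : Fin n → ℝ) (u : Fin m → ℝ) (M : Matrix (Fin k) (Kix k m p) ℝ) :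
    T *ᵥ (A *ᵥ x + B *ᵥ u) -
        (F * M + regressor k (C *ᵥ x) u) *ᵥ Sum.elim (mvec (T * L)) (mvec (T * B)) =
      F *ᵥ (T *ᵥ x - M *ᵥ Sum.elim (mvec (T * L)) (mvec (T * B))) := by
  have hFTx : F *ᵥ (T *ᵥ x) = T *ᵥ (A *ᵥ x) - (T * L) *ᵥ (C *ᵥ x) := by
    simp only [mulVec_mulVec, hFT, Matrix.mul_sub, sub_mulVec, Matrix.mul_assoc]
  rw [add_mulVec, regressor_mulVec_elim_mvec, mulVec_sub, hFTx, mulVec_add, mulVec_mulVec u,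
    mulVec_mulVec _ F M]
  abel

theorem stmt1_general {k n m p : ℕ}
    (A : Matrix (Fin n) (Fin n) ℝ) (B : Matrix (Fin n) (Fin m) ℝ) (C : Matrix (Fin p) (Fin n) ℝ)
    (F : Matrix (Fin k) (Fin k) ℝ) (L : Matrix (Fin n) (Fin p) ℝ) (T : Matrix (Fin k) (Fin n) ℝ)
    (hFT : F * T = T * (A - L * C))
    (θ : Kix k m p → ℝ) (hθ : θ = Sum.elim (mvec (T * L)) (mvec (T * B)))
    {s : Set ℝ} (hs : Convex ℝ s) (h0 : 0 ∈ s)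
    (u : ℝ → Fin m → ℝ) (x : ℝ → Fin n → ℝ) (M : ℝ → Matrix (Fin k) (Kix k m p) ℝ)
    (hx : ∀ t ∈ s, ∀ i, HasDerivWithinAt (fun r => x r i) ((A *ᵥ x t + B *ᵥ u t) i) s t)
    (hM : ∀ t ∈ s, ∀ i j, HasDerivWithinAt (fun r => M r i j)
      ((F * M t + regressor k (C *ᵥ x t) (u t)) i j) s t)
    {t : ℝ} (ht : t ∈ s) :
    T *ᵥ x t = M t *ᵥ θ + NormedSpace.exp (t • F) *ᵥ (T *ᵥ x 0 - M 0 *ᵥ θ) := by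
  have herror : ∀ r ∈ s, HasDerivWithinAt (fun r => T *ᵥ x r - M r *ᵥ θ)
      (F *ᵥ (T *ᵥ x r - M r *ᵥ θ)) s r := by
    intro r hr
    have hTx := hasDerivWithinAt_mulVec (P := fun _ => T) (P' := 0)
      (fun i j => hasDerivWithinAt_const r s (T i j)) (hasDerivWithinAt_pi.2 (hx r hr))
    have hMθ := hasDerivWithinAt_mulVec (hM r hr) (hasDerivWithinAt_const r s θ)
    refine (hTx.sub hMθ).congr_deriv ?_
    rw [zero_mulVec, zero_add, mulVec_zero, add_zero, hθ, kreisselmeier_error_dynamics hFT]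
  exact sub_eq_iff_eq_add'.1 (eq_exp_smul_mulVec_of_hasDerivWithinAt hs herror h0 ht)

/-- Kreisselmeier's filter relation, explicit `θ`.
With `T` invertible, `F·T = T·(A − L·C)` and `θ := [vec(T·L); vec(T·B)]`, every plant
trajectory and filter trajectory satisfy
`T x(t) = M(t) θ + exp(Ft) (T x(0) − M(0) θ)` for all `t ≥ 0`. -/
theorem stmt1 {n m p : ℕ}
    (A : Matrix (Fin n) (Fin n) ℝ) (B : Matrix (Fin n) (Fin m) ℝ)
    (C : Matrix (Fin p) (Fin n) ℝ)
    (F : Matrix (Fin n) (Fin n) ℝ) (L : Matrix (Fin n) (Fin p) ℝ)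
    (T : Matrix (Fin n) (Fin n) ℝ) (hT : IsUnit T)
    (hFT : F * T = T * (A - L * C))
    (θ : Kix n m p → ℝ) (hθ : θ = Sum.elim (mvec (T * L)) (mvec (T * B))) :
    ∀ (u : ℝ → Fin m → ℝ) (x : ℝ → Fin n → ℝ) (M : ℝ → Matrix (Fin n) (Kix n m p) ℝ),
      (∀ t, 0 ≤ t → ∀ i, HasDerivAt (fun s => x s i)
          ((A.mulVec (x t) + B.mulVec (u t)) i) t) →
      (∀ t, 0 ≤ t → ∀ i j, HasDerivAt (fun s => M s i j)
          ((F * M t + regressor n (C.mulVec (x t)) (u t)) i j) t) →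
      ∀ t, 0 ≤ t →
        T.mulVec (x t) = (M t).mulVec θ +
          (NormedSpace.exp (t • F)).mulVec (T.mulVec (x 0) - (M 0).mulVec θ) := by
  intro u x M hx hM t ht
  exact stmt1_general A B C F L T hFT θ hθ (convex_Ici 0) Set.self_mem_Ici u x M
    (fun r hr i => (hx r hr i).hasDerivWithinAt) (fun r hr i j => (hM r hr i j).hasDerivWithinAt) ht
end

section
/- Let A ∈ ℝ^{n×n}, B ∈ ℝ^{n×m}, C ∈ ℝ^{p×n}, μ := (p+m)·n, L ∈ ℝ^{n×p}, let F ∈ ℝ^{n×n} be Hurwitz, and let T ∈ ℝ^{n×n} be invertible with F·T = T·(A − L·C). Define θ := [vec(T·L); vec(T·B)] ∈ ℝ^{μ}. Let u, x, y, M be as follows: x : ℝ → ℝ^n differentiable with x'(t) = A·x(t) + B·u(t), y(t) := C·x(t), and M : ℝ → ℝ^{n×μ} differentiable with M'(t) = F·M(t) + [y(t)^⊤ ⊗ I_n , u(t)^⊤ ⊗ I_n] for all t ≥ 0. Define the transverse coordinate β(t) := T·x(t) − M(t)·θ ∈ ℝ^n. Then β is differentiable with β'(t) = F·β(t) for all t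 ≥ 0, so β(t) = exp(F·t)·β(0), and there exist constants c > 0 and λ > 0 such that ‖β(t)‖ ≤ c·e^{−λ·t}·‖β(0)‖ for all t ≥ 0. -/
open Matrix Filter
open scoped Kronecker

/-!
Differentiating `β = T x - M θ`, the regressor contributes `T L C x + T B u`, so the input terms
cancel and `F T = T (A - L C)` leaves `β' = F β`; uniqueness for linear ODEs gives
`β t = exp (t F) β 0`.

For the decay, `ℂⁿ` is the sum of the generalized eigenspaces of `F`. On a vector killed by
`(F - z)^k` the exponential `exp (t F)` acts as `exp (t z)` times a polynomial in `t` of degree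
less than `k`, which is `O(exp (a t))` whenever `Re z < a`. As the spectrum is finite, one negative
`a` serves all eigenvalues, and the constants obtained depend only on `F`.
-/

open Asymptotics Topology

section BanachAlgebra

variable {𝕜 : Type*} [RCLike 𝕜]

theorem exp_smul_eq_exp_mul_smul_exp_smul_sub {𝔸 : Type*} [NormedRing 𝔸] [NormedAlgebra 𝕜 𝔸]
    [CompleteSpace 𝔸] (a : 𝔸) (z t : 𝕜) :
    NormedSpace.exp (t • a) =
      NormedSpace.exp (t * z) • NormedSpace.exp (t • (a - algebraMap 𝕜 𝔸 z)) := by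
  have : NormedAlgebra ℚ 𝔸 := .restrictScalars ℚ 𝕜 𝔸
  have split : t • a = algebraMap 𝕜 𝔸 (t * z) + t • (a - algebraMap 𝕜 𝔸 z) := by
    rw [smul_sub, map_mul, ← Algebra.smul_def, add_sub_cancel]
  rw [split, NormedSpace.exp_add_of_commute (Algebra.commute_algebraMap_left _ _),
    ← NormedSpace.algebraMap_exp_comm, ← Algebra.smul_def]

theorem exp_apply_eq_sum_of_pow_apply_eq_zero {E : Type*} [NormedAddCommGroup E]
    [NormedSpace 𝕜 E] [CompleteSpace E] {N : E →L[𝕜] E} {w : E} {k : ℕ} (hk : (N ^ k) w = 0) :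
    NormedSpace.exp N w = ∑ j ∈ Finset.range k, (j.factorial : 𝕜)⁻¹ • (N ^ j) w := by
  have series : HasSum (fun j : ℕ => (j.factorial : 𝕜)⁻¹ • (N ^ j) w) (NormedSpace.exp N w) :=
    (NormedSpace.exp_series_hasSum_exp' (𝕂 := 𝕜) N).mapL (ContinuousLinearMap.apply 𝕜 E w)
  refine series.unique (hasSum_sum_of_ne_finset_zero fun j hj => ?_)
  obtain ⟨i, rfl⟩ := Nat.exists_eq_add_of_le' (by simpa using hj : k ≤ j)
  rw [pow_add, mul_apply_eq_comp, hk, map_zero, smul_zero]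

end BanachAlgebra

section ContinuousLinearMaps

variable {𝕜 E F : Type*} [NontriviallyNormedField 𝕜] [NormedAddCommGroup E] [NormedSpace 𝕜 E]
  [NormedAddCommGroup F] [NormedSpace 𝕜 F]

theorem mem_spectrum_of_pow_apply_eq_zero {A : E →L[𝕜] E} {z : 𝕜} {w : E} (hw : w ≠ 0) {k : ℕ}
    (hk : ((A - algebraMap 𝕜 _ z) ^ k) w = 0) : z ∈ spectrum 𝕜 A := by
  by_contra hz
  have isUnit_pow : IsUnit ((A - algebraMap 𝕜 (E →L[𝕜] E) z) ^ k) := by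
    rw [← neg_sub]
    exact (spectrum.notMem_iff.1 hz).neg.pow k
  obtain ⟨U, hU⟩ := isUnit_pow
  have inv_mul_apply : (U⁻¹ * U : E →L[𝕜] E) w = 0 := by
    rw [hU, mul_apply_eq_comp, hk, map_zero]
  exact hw (by simpa using inv_mul_apply)

theorem isBigO_of_forall_isBigO_apply [CompleteSpace 𝕜] [FiniteDimensional 𝕜 E] {α G : Type*}
    [SeminormedAddCommGroup G] {l : Filter α} {Φ : α → E →L[𝕜] F} {g : α → G}
    (h : ∀ w, (fun t => Φ t w) =O[l] g) : Φ =O[l] g := by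
  let b := Module.finBasis 𝕜 E
  obtain ⟨C, -, hC⟩ := b.exists_opNorm_le (F := F)
  have basis_isBigO : (fun t i => Φ t (b i)) =O[l] g := isBigO_pi.2 fun i => h (b i)
  refine IsBigO.trans (IsBigO.of_bound C (Eventually.of_forall fun t => ?_)) basis_isBigO
  exact hC (norm_nonneg _) fun i => norm_le_pi_norm (fun i => Φ t (b i)) i

end ContinuousLinearMaps

section Growth

variable {E : Type*} [NormedAddCommGroup E] [NormedSpace ℂ E]

theorem isBigO_exp_mul_pow {z : ℂ} {a : ℝ} (hza : z.re < a) (j : ℕ) :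
    (fun t : ℝ => Complex.exp (t * z) * (t : ℂ) ^ j)
      =O[𝓟 (Set.Ici 0)] fun t => Real.exp (a * t) := by
  obtain ⟨δ, hδ, rfl⟩ : ∃ δ > 0, a = z.re + δ := ⟨a - z.re, sub_pos.2 hza, by ring⟩
  refine isBigO_principal.2 ⟨j.factorial / δ ^ j, fun t (ht : 0 ≤ t) => ?_⟩
  have pow_le : t ^ j ≤ j.factorial / δ ^ j * Real.exp (δ * t) := by
    have := Real.pow_div_factorial_le_exp (δ * t) (by positivity) j
    rw [mul_pow, div_le_iff₀ (by positivity)] at this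
    rw [div_mul_eq_mul_div, le_div_iff₀ (by positivity)]
    linarith
  calc ‖Complex.exp (t * z) * (t : ℂ) ^ j‖
      = Real.exp (z.re * t) * t ^ j := by
        simp [Complex.norm_exp, abs_of_nonneg ht, mul_comm]
    _ ≤ Real.exp (z.re * t) * (j.factorial / δ ^ j * Real.exp (δ * t)) := by gcongr
    _ = j.factorial / δ ^ j * ‖Real.exp ((z.re + δ) * t)‖ := by
        rw [Real.norm_eq_abs, Real.abs_exp, add_mul, Real.exp_add]
        ring

theorem isBigO_exp_smul_apply_of_pow_apply_eq_zero [CompleteSpace E] {A : E →L[ℂ] E} {z : ℂ}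
    {a : ℝ} (hza : z.re < a) {w : E} {k : ℕ} (hk : ((A - algebraMap ℂ _ z) ^ k) w = 0) :
    (fun t : ℝ => NormedSpace.exp ((t : ℂ) • A) w)
      =O[𝓟 (Set.Ici 0)] fun t => Real.exp (a * t) := by
  set N := A - algebraMap ℂ (E →L[ℂ] E) z
  have expansion (t : ℝ) : NormedSpace.exp ((t : ℂ) • A) w = ∑ j ∈ Finset.range k,
      (Complex.exp (t * z) * (t : ℂ) ^ j) • ((j.factorial : ℂ)⁻¹ • (N ^ j) w) := by
    have hk' : (((t : ℂ) • N) ^ k) w = 0 := by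
      rw [smul_pow, _root_.smul_apply, hk, smul_zero]
    rw [exp_smul_eq_exp_mul_smul_exp_smul_sub A z, _root_.smul_apply,
      exp_apply_eq_sum_of_pow_apply_eq_zero hk', ← Complex.exp_eq_exp_ℂ, Finset.smul_sum]
    refine Finset.sum_congr rfl fun j _ => ?_
    rw [smul_pow, _root_.smul_apply, mul_smul, smul_comm ((t : ℂ) ^ j)]
  simp only [expansion]
  refine IsBigO.fun_sum fun j _ => ?_
  simpa using (isBigO_exp_mul_pow hza j).smul
    (isBigO_const_const ((j.factorial : ℂ)⁻¹ • (N ^ j) w) (one_ne_zero (α := ℝ)) _)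

theorem isBigO_exp_smul [FiniteDimensional ℂ E] {A : E →L[ℂ] E} {a : ℝ}
    (hA : ∀ z ∈ spectrum ℂ A, z.re < a) :
    (fun t : ℝ => NormedSpace.exp ((t : ℂ) • A))
      =O[𝓟 (Set.Ici 0)] fun t => Real.exp (a * t) := by
  have : CompleteSpace E := FiniteDimensional.complete ℂ E
  refine isBigO_of_forall_isBigO_apply fun w => ?_
  have hw : w ∈ ⨆ z, Module.End.maxGenEigenspace (A : E →ₗ[ℂ] E) z := by
    rw [Module.End.iSup_maxGenEigenspace_eq_top]; trivial
  induction hw using Submodule.iSup_induction' with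
  | zero => simp only [map_zero]; exact isBigO_zero _ _
  | add v w _ _ hv hw => simp only [map_add]; exact hv.add hw
  | mem z w hw =>
    obtain ⟨k, hk⟩ := (Module.End.mem_maxGenEigenspace _ _ _).1 hw
    have hk' : ((A - algebraMap ℂ _ z) ^ k) w = 0 := by
      rw [← hk, ← ContinuousLinearMap.coe_coe, ContinuousLinearMap.toLinearMap_pow]
      rfl
    rcases eq_or_ne w 0 with rfl | hw0
    · simp only [map_zero]; exact isBigO_zero _ _
    · exact isBigO_exp_smul_apply_of_pow_apply_eq_zero
        (hA z (mem_spectrum_of_pow_apply_eq_zero hw0 hk')) hk'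

end Growth

section LinearODE

variable {E : Type*} [NormedAddCommGroup E] [NormedSpace ℝ E] [CompleteSpace E]

theorem eq_exp_smul_apply_of_hasDerivAt {A : E →L[ℝ] E} {f : ℝ → E}
    (hf : ∀ t, 0 ≤ t → HasDerivAt f (A (f t)) t) {t : ℝ} (ht : 0 ≤ t) :
    f t = NormedSpace.exp (t • A) (f 0) := by
  have hexp (s : ℝ) : HasDerivAt (fun s : ℝ => NormedSpace.exp (s • A) (f 0))
      (A (NormedSpace.exp (s • A) (f 0))) s :=
    (hasDerivAt_exp_smul_const' A s).clm_apply (hasDerivAt_const s (f 0)) |>.congr_deriv (by simp)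
  exact ODE_solution_unique (v := fun _ => A) (fun _ => A.lipschitz)
    (fun s hs => (hf s hs.1).continuousAt.continuousWithinAt)
    (fun s hs => (hf s hs.1).hasDerivWithinAt)
    (fun s _ => (hexp s).continuousAt.continuousWithinAt)
    (fun s _ => (hexp s).hasDerivWithinAt)
    (by simp) ⟨ht, le_rfl⟩

end LinearODE

theorem euclNorm_eq_norm_toLp_ofReal {ι : Type*} [Fintype ι] (v : ι → ℝ) :
    euclNorm v = ‖WithLp.toLp 2 (Complex.ofReal ∘ v)‖ := by
  simp [euclNorm, EuclideanSpace.norm_eq]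

section MatrixExponential

variable {ι : Type*} [Fintype ι] [DecidableEq ι]

theorem toEuclideanCLM_exp {𝕜 : Type*} [RCLike 𝕜] (A : Matrix ι ι 𝕜) :
    toEuclideanCLM (𝕜 := 𝕜) (NormedSpace.exp A) =
      NormedSpace.exp (toEuclideanCLM (𝕜 := 𝕜) A) := by
  open scoped Matrix.Norms.Operator in
  exact NormedSpace.map_exp (toEuclideanCLM (n := ι) (𝕜 := 𝕜))
    (LinearMap.continuous_of_finiteDimensional
      (toEuclideanCLM (n := ι) (𝕜 := 𝕜)).toAlgEquiv.toLinearMap) A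

theorem map_ofReal_exp (A : Matrix ι ι ℝ) :
    (NormedSpace.exp A).map Complex.ofReal = NormedSpace.exp (A.map Complex.ofReal) := by
  open scoped Matrix.Norms.Operator in
  exact NormedSpace.map_exp (Complex.ofRealHom.mapMatrix (m := ι))
    (continuous_id.matrix_map Complex.continuous_ofReal) A

theorem eq_exp_smul_mulVec_of_hasDerivAt {A : Matrix ι ι ℝ} {f : ℝ → ι → ℝ}
    (hf : ∀ t, 0 ≤ t → HasDerivAt f (A *ᵥ f t) t) {t : ℝ} (ht : 0 ≤ t) :
    f t = NormedSpace.exp (t • A) *ᵥ f 0 := by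
  have hlp (s : ℝ) (hs : 0 ≤ s) : HasDerivAt (fun s => WithLp.toLp 2 (f s))
      (toEuclideanCLM (𝕜 := ℝ) A (WithLp.toLp 2 (f s))) s :=
    (PiLp.continuousLinearEquiv 2 ℝ fun _ : ι => ℝ).symm.hasFDerivAt.comp_hasDerivAt s (hf s hs)
  have := eq_exp_smul_apply_of_hasDerivAt hlp ht
  rw [← map_smul, ← toEuclideanCLM_exp, toEuclideanCLM_toLp] at this
  exact WithLp.toLp_injective 2 this

theorem euclNorm_exp_smul_mulVec_le (A : Matrix ι ι ℝ) (t : ℝ) (v : ι → ℝ) :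
    euclNorm (NormedSpace.exp (t • A) *ᵥ v) ≤
      ‖NormedSpace.exp ((t : ℂ) • toEuclideanCLM (𝕜 := ℂ) (A.map Complex.ofReal))‖ *
        euclNorm v := by
  have smul_map : (t • A).map Complex.ofReal = (t : ℂ) • A.map Complex.ofReal := by
    ext i j; simp
  have complexify : Complex.ofReal ∘ (NormedSpace.exp (t • A) *ᵥ v) =
      NormedSpace.exp ((t : ℂ) • A.map Complex.ofReal) *ᵥ (Complex.ofReal ∘ v) := by
    rw [← smul_map, ← map_ofReal_exp]
    exact funext (RingHom.map_mulVec Complex.ofRealHom _ v)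
  rw [euclNorm_eq_norm_toLp_ofReal, euclNorm_eq_norm_toLp_ofReal, complexify,
    ← toEuclideanCLM_toLp, toEuclideanCLM_exp, map_smul]
  exact ContinuousLinearMap.le_opNorm _ _

theorem IsHurwitz.exists_re_lt_neg {A : Matrix ι ι ℝ} (hA : IsHurwitz A) :
    ∃ lam > 0, ∀ z ∈ spectrum ℂ (A.map Complex.ofReal), z.re < -lam := by
  have eventually_lt : ∀ᶠ lam : ℝ in 𝓝[>] 0,
      ∀ z ∈ spectrum ℂ (A.map Complex.ofReal), z.re < -lam := by
    refine (eventually_all_finite (Matrix.finite_spectrum _)).2 fun z hz => ?_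
    filter_upwards [Ioo_mem_nhdsGT (neg_pos.2 (hA z hz))] with lam hlam
    exact lt_neg_of_lt_neg hlam.2
  exact (eventually_mem_nhdsWithin.and eventually_lt).exists

theorem IsHurwitz.exists_euclNorm_exp_smul_mulVec_le {A : Matrix ι ι ℝ} (hA : IsHurwitz A) :
    ∃ c > 0, ∃ lam > 0, ∀ t, 0 ≤ t → ∀ v,
      euclNorm (NormedSpace.exp (t • A) *ᵥ v) ≤ c * Real.exp (-lam * t) * euclNorm v := by
  obtain ⟨lam, hlam, hspec⟩ := hA.exists_re_lt_neg
  rw [← AlgEquiv.spectrum_eq (toEuclideanCLM (n := ι) (𝕜 := ℂ))] at hspec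
  obtain ⟨c, hc, hbound⟩ := (isBigO_exp_smul hspec).exists_pos
  refine ⟨c, hc, lam, hlam, fun t ht v => (euclNorm_exp_smul_mulVec_le A t v).trans ?_⟩
  have := isBigOWith_principal.1 hbound t ht
  rw [Real.norm_eq_abs, Real.abs_exp] at this
  exact mul_le_mul_of_nonneg_right this (Real.sqrt_nonneg _)

end MatrixExponential

theorem hasDerivAt_mulVec {ι κ : Type*} [Fintype κ] {M : ℝ → Matrix ι κ ℝ} {M' : Matrix ι κ ℝ}
    {v : ℝ → κ → ℝ} {v' : κ → ℝ} {t : ℝ}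
    (hM : ∀ i j, HasDerivAt (fun s => M s i j) (M' i j) t) (hv : HasDerivAt v v' t) :
    HasDerivAt (fun s => M s *ᵥ v s) (M' *ᵥ v t + M t *ᵥ v') t := by
  refine hasDerivAt_pi.2 fun i => ?_
  simp only [Pi.add_apply, mulVec, dotProduct, ← Finset.sum_add_distrib]
  exact HasDerivAt.fun_sum fun j _ => (hM i j).mul (hasDerivAt_pi.1 hv j)

section Kreisselmeier

theorem rowKron_one_mulVec_mvec {n : ℕ} {K : Type*} [Fintype K] (y : K → ℝ)
    (X : Matrix (Fin n) K ℝ) : rowKron y 1 *ᵥ mvec X = X *ᵥ y := by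
  ext i
  simp [rowKron, mvec, mulVec, dotProduct, Fintype.sum_prod_type, one_apply, mul_comm]

variable {n m p : ℕ} {κ : Type*} [Fintype κ] {A : Matrix κ κ ℝ} {B : Matrix κ (Fin m) ℝ}
  {C : Matrix (Fin p) κ ℝ} {F : Matrix (Fin n) (Fin n) ℝ} {L : Matrix κ (Fin p) ℝ}
  {T : Matrix (Fin n) κ ℝ}

/-- The parameter vector `θ = [vec(T·L); vec(T·B)]` of the Kreisselmeier filter, for which
`M·θ` is an estimate of `T·x`. -/
def filterParam (T : Matrix (Fin n) κ ℝ) (L : Matrix κ (Fin p) ℝ) (B : Matrix κ (Fin m) ℝ) :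
    Kix n m p → ℝ :=
  Sum.elim (mvec (T * L)) (mvec (T * B))

theorem regressor_mulVec_filterParam (y : Fin p → ℝ) (u : Fin m → ℝ) :
    regressor n y u *ᵥ filterParam T L B = (T * L) *ᵥ y + (T * B) *ᵥ u := by
  rw [regressor, filterParam, fromCols_mulVec, Sum.elim_comp_inl, Sum.elim_comp_inr,
    rowKron_one_mulVec_mvec, rowKron_one_mulVec_mvec]

theorem transverse_vectorField_eq (hFT : F * T = T * (A - L * C)) (u : Fin m → ℝ) (x : κ → ℝ)
    (M : Matrix (Fin n) (Kix n m p) ℝ) :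
    T *ᵥ (A *ᵥ x + B *ᵥ u) - (F * M + regressor n (C *ᵥ x) u) *ᵥ filterParam T L B =
      F *ᵥ (T *ᵥ x - M *ᵥ filterParam T L B) := by
  rw [add_mulVec, regressor_mulVec_filterParam, mulVec_sub, mulVec_mulVec x F T, hFT]
  simp only [mulVec_add, mulVec_mulVec, Matrix.mul_sub, sub_mulVec, Matrix.mul_assoc]
  abel

theorem hasDerivAt_transverse (hFT : F * T = T * (A - L * C)) {u : Fin m → ℝ} {x : ℝ → κ → ℝ}
    {M : ℝ → Matrix (Fin n) (Kix n m p) ℝ} {t : ℝ} (hx : HasDerivAt x (A *ᵥ x t + B *ᵥ u) t)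
    (hM : ∀ i j, HasDerivAt (fun s => M s i j) ((F * M t + regressor n (C *ᵥ x t) u) i j) t) :
    HasDerivAt (fun s => T *ᵥ x s - M s *ᵥ filterParam T L B)
      (F *ᵥ (T *ᵥ x t - M t *ᵥ filterParam T L B)) t := by
  rw [← transverse_vectorField_eq hFT u]
  have hTx : HasDerivAt (fun s => T *ᵥ x s) (T *ᵥ (A *ᵥ x t + B *ᵥ u)) t := by
    simpa using hasDerivAt_mulVec (M' := 0) (fun i j => hasDerivAt_const t (T i j)) hx
  have hMθ : HasDerivAt (fun s => M s *ᵥ filterParam T L B)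
      ((F * M t + regressor n (C *ᵥ x t) u) *ᵥ filterParam T L B) t := by
    simpa using hasDerivAt_mulVec hM (hasDerivAt_const t (filterParam T L B))
  exact hTx.sub hMθ

end Kreisselmeier

theorem stmt2_general {n m p : ℕ} {κ : Type*} [Fintype κ]
    (A : Matrix κ κ ℝ) (B : Matrix κ (Fin m) ℝ) (C : Matrix (Fin p) κ ℝ)
    (F : Matrix (Fin n) (Fin n) ℝ) (hHur : IsHurwitz F)
    (L : Matrix κ (Fin p) ℝ)
    (T : Matrix (Fin n) κ ℝ) (hFT : F * T = T * (A - L * C))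
    (θ : Kix n m p → ℝ) (hθ : θ = Sum.elim (mvec (T * L)) (mvec (T * B)))
    (u : ℝ → Fin m → ℝ) (x : ℝ → κ → ℝ) (M : ℝ → Matrix (Fin n) (Kix n m p) ℝ)
    (hx : ∀ t, 0 ≤ t → ∀ i, HasDerivAt (fun s => x s i)
        ((A.mulVec (x t) + B.mulVec (u t)) i) t)
    (hM : ∀ t, 0 ≤ t → ∀ i j, HasDerivAt (fun s => M s i j)
        ((F * M t + regressor n (C.mulVec (x t)) (u t)) i j) t)
    (β : ℝ → Fin n → ℝ) (hβ : ∀ t, β t = T.mulVec (x t) - (M t).mulVec θ) :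
    (∀ t, 0 ≤ t → ∀ i, HasDerivAt (fun s => β s i) (F.mulVec (β t) i) t) ∧
    (∀ t, 0 ≤ t → β t = (NormedSpace.exp (t • F)).mulVec (β 0)) ∧
    (∃ c > (0 : ℝ), ∃ lam > (0 : ℝ), ∀ t, 0 ≤ t →
      euclNorm (β t) ≤ c * Real.exp (-lam * t) * euclNorm (β 0)) := by
  obtain rfl : β = _ := funext hβ
  obtain rfl : θ = filterParam T L B := hθ
  have hderiv := fun t ht => hasDerivAt_transverse hFT (hasDerivAt_pi.2 (hx t ht)) (hM t ht)
  have hflow := fun t ht => eq_exp_smul_mulVec_of_hasDerivAt hderiv (t := t) ht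
  obtain ⟨c, hc, lam, hlam, hdecay⟩ := hHur.exists_euclNorm_exp_smul_mulVec_le
  exact ⟨fun t ht => hasDerivAt_pi.1 (hderiv t ht), hflow, c, hc, lam, hlam,
    fun t ht => (congrArg euclNorm (hflow t ht)).trans_le (hdecay t ht _)⟩

/-- Corollary 1 in the paper: the transverse coordinate.
With `F` Hurwitz, `T` invertible, `F·T = T·(A − L·C)` and `θ := [vec(T·L); vec(T·B)]`,
the transverse coordinate `β(t) := T·x(t) − M(t)·θ` satisfies `β' = F·β` on `t ≥ 0`,
hence `β(t) = exp(Ft)·β(0)`, and `‖β(t)‖ ≤ c·e^{−λt}·‖β(0)‖` for some `c, λ > 0`. -/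
theorem stmt2 {n m p : ℕ}
    (A : Matrix (Fin n) (Fin n) ℝ) (B : Matrix (Fin n) (Fin m) ℝ)
    (C : Matrix (Fin p) (Fin n) ℝ)
    (F : Matrix (Fin n) (Fin n) ℝ) (hHur : IsHurwitz F)
    (L : Matrix (Fin n) (Fin p) ℝ)
    (T : Matrix (Fin n) (Fin n) ℝ) (hT : IsUnit T)
    (hFT : F * T = T * (A - L * C))
    (θ : Kix n m p → ℝ) (hθ : θ = Sum.elim (mvec (T * L)) (mvec (T * B)))
    (u : ℝ → Fin m → ℝ) (x : ℝ → Fin n → ℝ) (M : ℝ → Matrix (Fin n) (Kix n m p) ℝ)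
    (hx : ∀ t, 0 ≤ t → ∀ i, HasDerivAt (fun s => x s i)
        ((A.mulVec (x t) + B.mulVec (u t)) i) t)
    (hM : ∀ t, 0 ≤ t → ∀ i j, HasDerivAt (fun s => M s i j)
        ((F * M t + regressor n (C.mulVec (x t)) (u t)) i j) t)
    (β : ℝ → Fin n → ℝ) (hβ : ∀ t, β t = T.mulVec (x t) - (M t).mulVec θ) :
    (∀ t, 0 ≤ t → ∀ i, HasDerivAt (fun s => β s i) (F.mulVec (β t) i) t) ∧
    (∀ t, 0 ≤ t → β t = (NormedSpace.exp (t • F)).mulVec (β 0)) ∧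
    (∃ c > (0 : ℝ), ∃ lam > (0 : ℝ), ∀ t, 0 ≤ t →
      euclNorm (β t) ≤ c * Real.exp (-lam * t) * euclNorm (β 0)) :=
  stmt2_general A B C F hHur L T hFT θ hθ u x M hx hM β hβ
end

section
/- Let A ∈ ℝ^{n×n}, B ∈ ℝ^{n×m}, C ∈ ℝ^{p×n} with (A, B) controllable (rank [B, AB, …, A^{n−1}B] = n) and (C, A) observable (rank [C; CA; …; CA^{n−1}] = n). Let μ := (p+m)·n, let F ∈ ℝ^{n×n} be Hurwitz with n distinct real eigenvalues, let L ∈ ℝ^{n×p} and T ∈ ℝ^{n×n} invertible satisfy F·T = T·(A − L·C), and define θ := [vec(T·L); vec(T·B)], Π := θ^⊤ ⊗ T^{−1}, F_ξ := I_μ ⊗ F, B_ξ := [0_{pn²×m}; I_m ⊗ vec(I_n)], L_ξ := [I_p ⊗ vec(I_n); 0_{mn²×p}], C_ξ := C·Π, A_ξ := F_ξ + L_ξ·C_ξ. Then the pair (A_ξ, B_ξ) is stabilizable: for every λ ∈ ℂ with Re λ ≥ 0, the complex matrix [λ·I_{nμ} − A_ξ , B_ξ] has rank nμ. -/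
open Matrix Filter
open scoped Kronecker

/-!
The matrix `Π` intertwines `F_ξ` with `A - L C` and sends `L_ξ`, `B_ξ` to `L`, `B`. Away from the
spectra of `F_ξ` and `A - L C`, every left eigenvector of `A_ξ = F_ξ + L_ξ C Π` therefore has the
form `v Π` for a left eigenvector `v` of `A` with the same eigenvalue, and `v Π B_ξ = v B`. Both
spectra lie in the open left half-plane, so the Hautus test for `(A_ξ, B_ξ)` reduces to the one
for `(A, B)`.
-/

section Rank

variable {q r K K' : Type*} [Fintype q] [Fintype r] [Field K] [Field K']

theorem rank_eq_card_iff_vecMul {M : Matrix q r K} :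
    M.rank = Fintype.card q ↔ ∀ w : q → K, w ᵥ* M = 0 → w = 0 := by
  have hrows : M.rank = Fintype.card q ↔ LinearIndependent K M.row := by
    rw [linearIndependent_iff_card_eq_finrank_span, Set.finrank, M.rank_eq_finrank_span_row,
      eq_comm]
  rw [hrows, ← vecMul_injective_iff]
  exact injective_iff_map_eq_zero M.vecMulLinear

theorem exists_mul_eq_one_of_rank_eq_card [DecidableEq q] {M : Matrix q r K}
    (hM : M.rank = Fintype.card q) : ∃ N : Matrix r q K, M * N = 1 := by
  refine mulVec_surjective_iff_exists_right_inverse.mp ?_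
  have hrange : LinearMap.range M.mulVecLin = ⊤ := Submodule.eq_top_of_finrank_eq
    (hM.trans (Module.finrank_fintype_fun_eq_card K).symm)
  exact LinearMap.range_eq_top.mp hrange

theorem rank_map_eq_card {M : Matrix q r K} (hM : M.rank = Fintype.card q) (f : K →+* K') :
    (M.map f).rank = Fintype.card q := by
  classical
  obtain ⟨N, hMN⟩ := exists_mul_eq_one_of_rank_eq_card hM
  have hMN_map : M.map f * N.map f = 1 := by
    rw [← Matrix.map_mul, hMN, Matrix.map_one f (map_zero f) (map_one f)]
  refine rank_eq_card_iff_vecMul.mpr fun w hw => ?_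
  rw [← vecMul_one w, ← hMN_map, ← vecMul_vecMul, hw, zero_vecMul]

end Rank

section LeftEigenvector

variable {q N R : Type*} [Fintype q] [Fintype N] [CommRing R]

theorem vecMul_algebraMap_sub [DecidableEq q] (z : R) (A : Matrix q q R) (v : q → R) :
    v ᵥ* (algebraMap R (Matrix q q R) z - A) = z • v - v ᵥ* A := by
  rw [vecMul_sub, Algebra.algebraMap_eq_smul_one, vecMul_smul, vecMul_one]

theorem vecMul_pow_of_vecMul_eq_smul [DecidableEq q] {A : Matrix q q R} {z : R} {v : q → R}
    (hv : v ᵥ* A = z • v) (k : ℕ) : v ᵥ* A ^ k = z ^ k • v := by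
  induction k with
  | zero => simp
  | succ k ih => rw [pow_succ, ← vecMul_vecMul, ih, smul_vecMul, hv, smul_smul, pow_succ]

-- `v` solves `z v - v G = w X`; intertwining makes `v P` and `w` solve the same equation
-- `z x - x F = w X P`, whose solution is unique.
theorem exists_vecMul_eq_of_intertwines [DecidableEq q] [DecidableEq N]
    {F : Matrix N N R} {G : Matrix q q R} {P : Matrix q N R} (hPF : P * F = G * P)
    (X : Matrix N q R) {z : R} (hzF : z ∉ spectrum R F) (hzG : z ∉ spectrum R G)
    {w : N → R} (hw : w ᵥ* (F + X * P) = z • w) :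
    ∃ v : q → R, v ᵥ* P = w ∧ v ᵥ* (G + P * X) = z • v := by
  obtain ⟨v, hv⟩ : ∃ v : q → R, v ᵥ* (algebraMap R _ z - G) = w ᵥ* X :=
    vecMul_surjective_iff_isUnit.mpr (spectrum.notMem_iff.mp hzG) _
  have hvP : v ᵥ* P = w := by
    refine vecMul_injective_of_isUnit (spectrum.notMem_iff.mp hzF) ?_
    calc v ᵥ* P ᵥ* (algebraMap R _ z - F)
        = v ᵥ* (algebraMap R _ z - G) ᵥ* P := by
          simp only [vecMul_algebraMap_sub, sub_vecMul, smul_vecMul, vecMul_vecMul, hPF]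
      _ = w ᵥ* (X * P) := by rw [hv, vecMul_vecMul]
      _ = w ᵥ* (algebraMap R _ z - F) := by
          rw [vecMul_algebraMap_sub, ← hw, vecMul_add, add_sub_cancel_left]
  refine ⟨v, hvP, ?_⟩
  rw [vecMul_algebraMap_sub, ← hvP, vecMul_vecMul] at hv
  rw [vecMul_add, ← hv, add_sub_cancel]

end LeftEigenvector

section Controllability

variable {q m R : Type*} [Fintype q] [DecidableEq q] [CommRing R]

/-- The controllability matrix `[B, AB, …, A^{N-1}B]`, its columns being indexed by pairs
(exponent of `A`, column of `B`). -/
def ctrbMatrix (N : ℕ) (A : Matrix q q R) (B : Matrix q m R) : Matrix q (Fin N × m) R :=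
  Matrix.of fun i k => (A ^ (k.1 : ℕ) * B) i k.2

theorem map_ctrbMatrix {S : Type*} [CommRing S] (f : R →+* S) (N : ℕ) (A : Matrix q q R)
    (B : Matrix q m R) : (ctrbMatrix N A B).map f = ctrbMatrix N (A.map f) (B.map f) := by
  ext i k
  have hpow : (A ^ (k.1 : ℕ)).map f = A.map f ^ (k.1 : ℕ) := map_pow f.mapMatrix A k.1
  simp only [ctrbMatrix, Matrix.map_apply, Matrix.of_apply, ← hpow, ← Matrix.map_mul]

theorem vecMul_ctrbMatrix_eq_zero {A : Matrix q q R} {B : Matrix q m R} {z : R} {v : q → R}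
    (hvA : v ᵥ* A = z • v) (hvB : v ᵥ* B = 0) (N : ℕ) : v ᵥ* ctrbMatrix N A B = 0 := by
  funext k
  have hk : v ᵥ* (A ^ (k.1 : ℕ) * B) = 0 := by
    rw [← vecMul_vecMul, vecMul_pow_of_vecMul_eq_smul hvA, smul_vecMul, hvB, smul_zero]
  exact congrFun hk k.2

end Controllability

section Hurwitz

variable {q r : Type*} [Fintype q] [DecidableEq q] [Fintype r] [DecidableEq r]

theorem spectrum_one_kronecker_subset {R : Type*} [CommRing R] (F : Matrix q q R) :
    spectrum R ((1 : Matrix r r R) ⊗ₖ F) ⊆ spectrum R F := by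
  intro z
  contrapose
  simp only [spectrum.notMem_iff]
  intro hz
  have hsub : algebraMap R (Matrix (r × q) (r × q) R) z - (1 : Matrix r r R) ⊗ₖ F
      = (1 : Matrix r r R) ⊗ₖ (algebraMap R (Matrix q q R) z - F) := by
    rw [sub_eq_iff_eq_add, ← kronecker_add, sub_add_cancel,
      Algebra.algebraMap_eq_smul_one, Algebra.algebraMap_eq_smul_one, kronecker_smul,
      one_kronecker_one]
  rw [hsub]
  exact Matrix.IsUnit.kronecker isUnit_one hz

theorem IsHurwitz.one_kronecker {F : Matrix q q ℝ} (hF : IsHurwitz F) :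
    IsHurwitz ((1 : Matrix r r ℝ) ⊗ₖ F) := by
  intro z hz
  have hmap : ((1 : Matrix r r ℝ) ⊗ₖ F).map Complex.ofReal
      = (1 : Matrix r r ℂ) ⊗ₖ F.map Complex.ofReal := by
    ext ⟨i, k⟩ ⟨j, l⟩
    simp [Matrix.one_apply, apply_ite Complex.ofReal]
  rw [hmap] at hz
  exact hF z (spectrum_one_kronecker_subset _ hz)

theorem IsHurwitz.of_mul_eq_mul {F G T : Matrix q q ℝ} (hF : IsHurwitz F) (hT : IsUnit T)
    (hFT : F * T = T * G) : IsHurwitz G := by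
  obtain ⟨T, rfl⟩ := hT
  intro z hz
  let U := Units.map Complex.ofRealHom.mapMatrix.toMonoidHom T
  have hconj : U⁻¹ * F.map Complex.ofReal * U = G.map Complex.ofReal := by
    rw [mul_assoc, Units.inv_mul_eq_iff_eq_mul]
    have hFT_map := congrArg Complex.ofRealHom.mapMatrix hFT
    rwa [map_mul, map_mul] at hFT_map
  rw [← hconj, spectrum.units_conjugate'] at hz
  exact hF z hz

theorem IsHurwitz.notMem_spectrum {F : Matrix q q ℝ} (hF : IsHurwitz F) {z : ℂ}
    (hz : 0 ≤ z.re) : z ∉ spectrum ℂ (F.map Complex.ofRealHom) :=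
  fun hmem => (hF z hmem).not_ge hz

end Hurwitz

section Stabilizable

variable {q N m : Type*} [Fintype q] [DecidableEq q] [Fintype N] [DecidableEq N] [Fintype m]

theorem isStabilizable_iff_vecMul {A : Matrix q q ℝ} {B : Matrix q m ℝ} :
    IsStabilizable A B ↔ ∀ z : ℂ, 0 ≤ z.re → ∀ v : q → ℂ,
      v ᵥ* A.map Complex.ofRealHom = z • v → v ᵥ* B.map Complex.ofRealHom = 0 → v = 0 := by
  refine forall₂_congr fun z _ => rank_eq_card_iff_vecMul.trans (forall_congr' fun v => ?_)
  rw [← and_imp, vecMul_fromCols, ← Sum.elim_zero_zero, Sum.elim_eq_iff,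
    ← Algebra.algebraMap_eq_smul_one, vecMul_algebraMap_sub, sub_eq_zero, eq_comm (a := z • v)]
  rfl

theorem isStabilizable_of_rank_ctrbMatrix {A : Matrix q q ℝ} {B : Matrix q m ℝ} {k : ℕ}
    (hAB : (ctrbMatrix k A B).rank = Fintype.card q) : IsStabilizable A B := by
  refine isStabilizable_iff_vecMul.mpr fun z _ v hvA hvB => ?_
  refine rank_eq_card_iff_vecMul.mp (rank_map_eq_card hAB Complex.ofRealHom) v ?_
  rw [map_ctrbMatrix]
  exact vecMul_ctrbMatrix_eq_zero hvA hvB k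

theorem IsStabilizable.of_intertwines {F : Matrix N N ℝ} {G : Matrix q q ℝ} {P : Matrix q N ℝ}
    {X : Matrix N q ℝ} {B : Matrix N m ℝ} (hF : IsHurwitz F) (hG : IsHurwitz G)
    (hPF : P * F = G * P) (hstab : IsStabilizable (G + P * X) (P * B)) :
    IsStabilizable (F + X * P) B := by
  rw [isStabilizable_iff_vecMul] at hstab ⊢
  intro z hz w hwA hwB
  have hPF_map : P.map Complex.ofRealHom * F.map Complex.ofRealHom
      = G.map Complex.ofRealHom * P.map Complex.ofRealHom := by
    rw [← Matrix.map_mul, hPF, Matrix.map_mul]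
  rw [Matrix.map_add _ (map_add _), Matrix.map_mul] at hwA
  obtain ⟨v, rfl, hv⟩ := exists_vecMul_eq_of_intertwines hPF_map _
    (hF.notMem_spectrum hz) (hG.notMem_spectrum hz) hwA
  have hv_zero : v = 0 := by
    refine hstab z hz v ?_ ?_
    · rwa [Matrix.map_add _ (map_add _), Matrix.map_mul]
    · rwa [Matrix.map_mul, ← vecMul_vecMul]
  rw [hv_zero, zero_vecMul]

end Stabilizable

section Realization

variable {n m p : ℕ}

theorem mul_rowKron {K : Type*} (θ : K → ℝ) (G S : Matrix (Fin n) (Fin n) ℝ) :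
    G * rowKron θ S = rowKron θ (G * S) := by
  ext i ⟨k, j⟩
  simp [rowKron, Matrix.mul_apply, Finset.mul_sum, mul_left_comm]

theorem rowKron_mul_one_kronecker {K : Type*} [Fintype K] [DecidableEq K] (θ : K → ℝ)
    (S F : Matrix (Fin n) (Fin n) ℝ) :
    rowKron θ S * ((1 : Matrix K K ℝ) ⊗ₖ F) = rowKron θ (S * F) := by
  ext i ⟨k, j⟩
  simp [rowKron, Matrix.mul_apply, Fintype.sum_prod_type, Matrix.one_apply, Finset.mul_sum,
    mul_assoc]

theorem rowKron_mul_Lxi (X : Matrix (Fin n) (Fin p) ℝ) (φ : Fin m × Fin n → ℝ)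
    (S : Matrix (Fin n) (Fin n) ℝ) :
    rowKron (Sum.elim (mvec X) φ) S * Lxi n m p = S * X := by
  ext i j
  simp [rowKron, mvec, Lxi, Matrix.mul_apply, Fintype.sum_prod_type, Matrix.one_apply, mul_comm]

theorem rowKron_mul_Bxi (φ : Fin p × Fin n → ℝ) (Y : Matrix (Fin n) (Fin m) ℝ)
    (S : Matrix (Fin n) (Fin n) ℝ) :
    rowKron (Sum.elim φ (mvec Y)) S * Bxi n m p = S * Y := by
  ext i j
  simp [rowKron, mvec, Bxi, Matrix.mul_apply, Fintype.sum_prod_type, Matrix.one_apply, mul_comm]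

/-- The map `Π := θᵀ ⊗ T⁻¹` with `θ := [vec(T L); vec(T B)]`, which sends the state of the
non-minimal realization to the state of the plant. -/
noncomputable def stateProj (T : Matrix (Fin n) (Fin n) ℝ) (L : Matrix (Fin n) (Fin p) ℝ)
    (B : Matrix (Fin n) (Fin m) ℝ) : Matrix (Fin n) (Kix n m p × Fin n) ℝ :=
  rowKron (Sum.elim (mvec (T * L)) (mvec (T * B))) T⁻¹

variable {T : Matrix (Fin n) (Fin n) ℝ} (L : Matrix (Fin n) (Fin p) ℝ)

theorem stateProj_mul_Lxi (hT : IsUnit T) (B : Matrix (Fin n) (Fin m) ℝ) :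
    stateProj T L B * Lxi n m p = L := by
  rw [stateProj, rowKron_mul_Lxi,
    nonsing_inv_mul_cancel_left _ _ ((isUnit_iff_isUnit_det T).mp hT)]

theorem stateProj_mul_Bxi (hT : IsUnit T) (B : Matrix (Fin n) (Fin m) ℝ) :
    stateProj T L B * Bxi n m p = B := by
  rw [stateProj, rowKron_mul_Bxi,
    nonsing_inv_mul_cancel_left _ _ ((isUnit_iff_isUnit_det T).mp hT)]

theorem stateProj_mul_Fxi (hT : IsUnit T) (B : Matrix (Fin n) (Fin m) ℝ)
    {F G : Matrix (Fin n) (Fin n) ℝ} (hFT : F * T = T * G) :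
    stateProj T L B * Fxi (m := m) (p := p) F = G * stateProj T L B := by
  have hdet : IsUnit T.det := (isUnit_iff_isUnit_det T).mp hT
  have hTF : T⁻¹ * F = G * T⁻¹ := by
    rw [← mul_nonsing_inv_cancel_right _ F hdet, hFT, ← Matrix.mul_assoc,
      nonsing_inv_mul_cancel_left _ _ hdet]
  rw [stateProj, Fxi, rowKron_mul_one_kronecker, hTF, mul_rowKron]

theorem stmt7_general {A F : Matrix (Fin n) (Fin n) ℝ} {B : Matrix (Fin n) (Fin m) ℝ}
    (hAB : IsStabilizable A B) (C : Matrix (Fin p) (Fin n) ℝ) (hF : IsHurwitz F)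
    (hT : IsUnit T) (hFT : F * T = T * (A - L * C)) :
    IsStabilizable (Fxi F + Lxi n m p * (C * stateProj T L B)) (Bxi n m p) := by
  have hA : A - L * C + stateProj T L B * (Lxi n m p * C) = A := by
    rw [← Matrix.mul_assoc, stateProj_mul_Lxi L hT, sub_add_cancel]
  rw [← Matrix.mul_assoc]
  refine IsStabilizable.of_intertwines hF.one_kronecker (hF.of_mul_eq_mul hT hFT)
    (stateProj_mul_Fxi L hT B hFT) ?_
  rwa [hA, stateProj_mul_Bxi L hT]

end Realization

/-- Lemma 3 in the paper: stabilizability of the canonical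
non-minimal realization. With `(A, B)` controllable, `(C, A)` observable, `F` Hurwitz
with `n` distinct real eigenvalues, `F·T = T·(A − L·C)` with `T` invertible,
`θ := [vec(T·L); vec(T·B)]`, `Pi := θᵀ ⊗ T⁻¹`, `C_ξ := C·Pi` and
`A_ξ := (I_μ ⊗ F) + L_ξ·C_ξ`, the pair `(A_ξ, B_ξ)` is stabilizable (PBH test). -/
theorem stmt7 {n m p : ℕ}
    (A : Matrix (Fin n) (Fin n) ℝ) (B : Matrix (Fin n) (Fin m) ℝ)
    (C : Matrix (Fin p) (Fin n) ℝ)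
    (hctrb : (Matrix.of fun i : Fin n => fun q : Fin n × Fin m =>
      (A ^ (q.1 : ℕ) * B) i q.2).rank = n)
    (hobs : (Matrix.of fun q : Fin n × Fin p => fun j : Fin n =>
      (C * A ^ (q.1 : ℕ)) q.2 j).rank = n)
    (F : Matrix (Fin n) (Fin n) ℝ) (hHur : IsHurwitz F)
    (hreal : (F.charpoly.roots).card = n)
    (hdist : (F.charpoly.roots).Nodup)
    (L : Matrix (Fin n) (Fin p) ℝ)
    (T : Matrix (Fin n) (Fin n) ℝ) (hT : IsUnit T)
    (hFT : F * T = T * (A - L * C))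
    (θ : Kix n m p → ℝ) (hθ : θ = Sum.elim (mvec (T * L)) (mvec (T * B)))
    (Pim : Matrix (Fin n) (Kix n m p × Fin n) ℝ) (hPim : Pim = rowKron θ T⁻¹)
    (Cξ : Matrix (Fin p) (Kix n m p × Fin n) ℝ) (hCξ : Cξ = C * Pim)
    (Aξ : Matrix (Kix n m p × Fin n) (Kix n m p × Fin n) ℝ)
    (hAξ : Aξ = Fxi F + Lxi n m p * Cξ) :
    IsStabilizable Aξ (Bxi n m p) := by
  subst hAξ hCξ hPim hθ
  have hAB : IsStabilizable A B :=
    isStabilizable_of_rank_ctrbMatrix (hctrb.trans (Fintype.card_fin n).symm)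
  exact stmt7_general L hAB C hHur hT hFT
end

section
/- Let A_a ∈ ℝ^{l×l}, B_a ∈ ℝ^{l×m}, and let data matrices Z_a ∈ ℝ^{l×N}, U ∈ ℝ^{m×N} be given, with Ż_a := A_a·Z_a + B_a·U. Suppose there exists Q ∈ ℝ^{N×l} such that Z_a·Q is symmetric and positive definite and Ż_a·Q + (Ż_a·Q)^⊤ is negative definite. Then the matrix K := U·Q·(Z_a·Q)^{−1} ∈ ℝ^{m×l} is such that A_a + B_a·K is Hurwitz. -/
open Matrix Filter
open scoped Kronecker

/-!
If `v` is a left eigenvector of `M` with eigenvalue `z`, then evaluating the Hermitian form of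
`M * P + (M * P)ᴴ` at `star v` gives `2 * re z` times the form of `P`, so Lyapunov's inequality
forces `re z < 0`. The theorem is the case `P = Za * Q`: the gain `K = U * Q * (Za * Q)⁻¹` is chosen
so that `K * P = U * Q`, whence `(Aa + Ba * K) * P = (Aa * Za + Ba * U) * Q`.
-/

open scoped ComplexOrder

section Lyapunov

variable {n : Type*} [Fintype n]

theorem exists_vecMul_eq_smul_of_mem_spectrum {K : Type*} [Field K] [DecidableEq n]
    {M : Matrix n n K} {z : K} (hz : z ∈ spectrum K M) : ∃ v ≠ 0, v ᵥ* M = z • v := by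
  rw [spectrum.mem_iff, isUnit_iff_isUnit_det, isUnit_iff_ne_zero, not_not] at hz
  obtain ⟨v, hv_ne, hv⟩ := exists_vecMul_eq_zero_iff.mpr hz
  refine ⟨v, hv_ne, ?_⟩
  rw [vecMul_sub, sub_eq_zero, Algebra.algebraMap_eq_smul_one, vecMul_smul, vecMul_one] at hv
  exact hv.symm

variable {𝕜 : Type*} [RCLike 𝕜]

theorem re_dotProduct_add_conjTranspose_mulVec (X : Matrix n n 𝕜) (w : n → 𝕜) :
    RCLike.re (star w ⬝ᵥ ((X + Xᴴ) *ᵥ w)) = 2 * RCLike.re (star w ⬝ᵥ (X *ᵥ w)) := by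
  have form_conjTranspose : star w ⬝ᵥ (Xᴴ *ᵥ w) = star (star w ⬝ᵥ (X *ᵥ w)) := by
    rw [star_dotProduct, star_mulVec, conjTranspose_conjTranspose, dotProduct_mulVec]
  rw [add_mulVec, dotProduct_add, form_conjTranspose, map_add, RCLike.star_def, RCLike.conj_re,
    two_mul]

theorem re_dotProduct_mul_mulVec_of_vecMul_eq_smul {M P : Matrix n n 𝕜} (hP : P.IsHermitian)
    {z : 𝕜} {w : n → 𝕜} (hw : star w ᵥ* M = z • star w) :
    RCLike.re (star w ⬝ᵥ ((M * P) *ᵥ w)) = RCLike.re z * RCLike.re (star w ⬝ᵥ (P *ᵥ w)) := by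
  rw [← mulVec_mulVec, dotProduct_mulVec, hw, smul_dotProduct, smul_eq_mul, RCLike.mul_re,
    hP.im_star_dotProduct_mulVec_self, mul_zero, sub_zero]

theorem re_neg_of_mem_spectrum_of_lyapunov [DecidableEq n] {M P : Matrix n n 𝕜}
    (hP : P.PosSemidef) (hMP : (-(M * P + (M * P)ᴴ)).PosDef) {z : 𝕜} (hz : z ∈ spectrum 𝕜 M) :
    RCLike.re z < 0 := by
  obtain ⟨v, hv_ne, hv⟩ := exists_vecMul_eq_smul_of_mem_spectrum hz
  obtain ⟨w, rfl⟩ := star_involutive.surjective v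
  have form_nonneg : 0 ≤ RCLike.re (star w ⬝ᵥ (P *ᵥ w)) := hP.re_dotProduct_nonneg w
  have lyapunov_form_pos := hMP.re_dotProduct_pos (star_ne_zero.mp hv_ne)
  rw [neg_mulVec, dotProduct_neg, map_neg, re_dotProduct_add_conjTranspose_mulVec,
    re_dotProduct_mul_mulVec_of_vecMul_eq_smul hP.isHermitian hv] at lyapunov_form_pos
  exact neg_of_mul_neg_left (by linarith) form_nonneg

end Lyapunov

section Complexification

variable {m n : Type*} (𝕜 : Type*) [RCLike 𝕜]

theorem conjTranspose_map_algebraMap (A : Matrix m n ℝ) :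
    (A.map (algebraMap ℝ 𝕜))ᴴ = Aᵀ.map (algebraMap ℝ 𝕜) := by
  ext i j
  simp

open scoped MatrixOrder in
theorem posSemidef_map_algebraMap [Finite n] {S : Matrix n n ℝ} (hS : S.PosSemidef) :
    (S.map (algebraMap ℝ 𝕜)).PosSemidef := by
  classical
  have := Fintype.ofFinite n
  obtain ⟨B, rfl⟩ := CStarAlgebra.nonneg_iff_eq_star_mul_self.mp hS.nonneg
  rw [star_eq_conjTranspose, conjTranspose_eq_transpose_of_trivial, Matrix.map_mul,
    ← conjTranspose_map_algebraMap]
  exact posSemidef_conjTranspose_mul_self _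

theorem posDef_map_algebraMap [Finite n] {S : Matrix n n ℝ} (hS : S.PosDef) :
    (S.map (algebraMap ℝ 𝕜)).PosDef := by
  classical
  have := Fintype.ofFinite n
  exact (posSemidef_map_algebraMap 𝕜 hS.posSemidef).posDef_iff_isUnit.mpr
    (hS.isUnit.map (algebraMap ℝ 𝕜).mapMatrix)

end Complexification

theorem isHurwitz_of_lyapunov {n : Type*} [Fintype n] [DecidableEq n] {M P : Matrix n n ℝ}
    (hP : P.PosSemidef) (hMP : (-(M * P + (M * P)ᵀ)).PosDef) : IsHurwitz M := by
  intro z hz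
  refine re_neg_of_mem_spectrum_of_lyapunov (posSemidef_map_algebraMap ℂ hP) ?_ hz
  change (-(M.map (algebraMap ℝ ℂ) * _ + (M.map (algebraMap ℝ ℂ) * _)ᴴ)).PosDef
  rw [← Matrix.map_mul, conjTranspose_map_algebraMap, ← Matrix.map_add _ (map_add _),
    ← Matrix.map_neg _ (map_neg _)]
  exact posDef_map_algebraMap ℂ hMP

theorem closedLoop_mul_of_isUnit {k l m N R : Type*} [Fintype l] [DecidableEq l] [Fintype m]
    [Fintype N] [CommRing R] (A : Matrix k l R) (B : Matrix k m R) {Z : Matrix l N R}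
    (U : Matrix m N R) {Q : Matrix N l R} (hZQ : IsUnit (Z * Q)) :
    (A + B * (U * Q * (Z * Q)⁻¹)) * (Z * Q) = (A * Z + B * U) * Q := by
  have gain_mul : U * Q * (Z * Q)⁻¹ * (Z * Q) = U * Q :=
    nonsing_inv_mul_cancel_right _ _ ((isUnit_iff_isUnit_det _).mp hZQ)
  rw [Matrix.add_mul, Matrix.mul_assoc B, gain_mul, Matrix.add_mul, Matrix.mul_assoc A,
    Matrix.mul_assoc B]

/-- data-driven LMI stabilization, cf. De Persis–Tesi.
With data `Z_a`, `U` and `Ż_a := A_a·Z_a + B_a·U`, if `Q` satisfies the LMI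
`Z_a·Q = (Z_a·Q)ᵀ ≻ 0` and `Ż_a·Q + (Ż_a·Q)ᵀ ≺ 0`, then
`K := U·Q·(Z_a·Q)⁻¹` makes `A_a + B_a·K` Hurwitz. -/
theorem stmt16 {l m N : ℕ}
    (Aa : Matrix (Fin l) (Fin l) ℝ) (Ba : Matrix (Fin l) (Fin m) ℝ)
    (Za : Matrix (Fin l) (Fin N) ℝ) (U : Matrix (Fin m) (Fin N) ℝ)
    (Zdot : Matrix (Fin l) (Fin N) ℝ) (hZdot : Zdot = Aa * Za + Ba * U)
    (Q : Matrix (Fin N) (Fin l) ℝ)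
    (hpos : (Za * Q).PosDef)
    (hneg : (-(Zdot * Q + (Zdot * Q)ᵀ)).PosDef) :
    IsHurwitz (Aa + Ba * (U * Q * (Za * Q)⁻¹)) := by
  refine isHurwitz_of_lyapunov hpos.posSemidef ?_
  rwa [closedLoop_mul_of_isUnit Aa Ba U hpos.isUnit, ← hZdot]
end
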